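/- Let 𝒫 be a finite simple type system on Ω. Then Stab_V(𝒫) is a maximal subgroup of Thompson's group V. -/

import Mathlib

/-!
Write `(α β)` for the element of `V` swapping the cones of two incomparable addresses. Such swaps
generate `V`, and it even suffices to have all swaps of small cones (`eq_VSet_of_deep_swaps`). If
`α ∼ β`, then `(α β)` lies in the stabilizer `M`. Let `H` be a subgroup with `M ≤ H ≤ V`. Simplicity
of `∼` is used throughout in the form of `SimpleTS.dichotomy`: a partial equivalence relation `R`
such that `∼`-equivalent addresses have `R`-related deep descendants either gives back `∼`, or
relates the deep descendants of any two addresses. Collapsing the types below an address (and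
finiteness) shows that one of two situations occurs.

* There is no absorbing type (a type shared by both children of its members), or there are at least
  two. Then every deep type recurs with enough room (`HasRoom`). Call two types linked if the
  swap of incomparable representatives is in `H`; conjugating swaps by swaps shows that this does not
  depend on the representatives and is a coherent equivalence relation. By simplicity either it is
  `∼`, so that `H`, which acts on swaps by conjugation, preserves `∼` and `H = M`, or it is
  eventually universal, so that `H` contains all small swaps and `H = V` (`HasRoom.maximal`).

* There is exactly one absorbing type `b`. By simplicity `α ∼ β` means that the same deep descendants
  of `α` and `β` are of type `b`, so an element preserving type `b` is in `M`. If `H ≠ M`, some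
  `h ∈ H` maps a cone `α` not of type `b` to one of type `b`. Conjugating swaps of type-`b` cones by
  `h` gives swaps between cones below `α` and type-`b` cones; all deep types other than `b` occur
  below `α`, and all small swaps follow (`maximal_of_unique_absorbing`).
-/

/-- Addresses: finite words over the alphabet `{0,1}` (`Bool`). -/
abbrev Addr : Type := List Bool

/-- Cantor space: infinite words over the alphabet `{0,1}`. -/
abbrev Cantor : Type := ℕ → Bool

/-- Prepend the finite word `α` to the infinite word `w`. -/
def wcat (α : Addr) (w : Cantor) : Cantor := fun n =>
  if h : n < α.length then α.get ⟨n, h⟩ else w (n - α.length)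

/-- The cone of the address `α`: the set of infinite words having `α` as a prefix. -/
def cone (α : Addr) : Set Cantor := Set.range (wcat α)

/-- `g` is a prefix substitution map: there are partitions of Cantor space into cones
`(A i)𝔠` and `(B i)𝔠` such that `g` maps `(A i) w` to `(B i) w`. -/
def IsPrefixSubst (g : Equiv.Perm Cantor) : Prop :=
  ∃ (n : ℕ) (A B : Fin n → Addr),
    (∀ i j, i ≠ j → Disjoint (cone (A i)) (cone (A j))) ∧
    (⋃ i, cone (A i)) = Set.univ ∧
    (∀ i j, i ≠ j → Disjoint (cone (B i)) (cone (B j))) ∧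
    (⋃ i, cone (B i)) = Set.univ ∧
    (∀ i w, g (wcat (A i) w) = wcat (B i) w)

/-- Thompson's group `V`, as the set of prefix substitution maps inside `Equiv.Perm Cantor`. -/
def VSet : Set (Equiv.Perm Cantor) := { g | IsPrefixSubst g }

/-- `α ^ g = β` : `g` maps the cone of `α` onto the cone of `β` by the prefix
substitution `α ↦ β`. -/
def actsOn (g : Equiv.Perm Cantor) (α β : Addr) : Prop :=
  ∀ w, g (wcat α w) = wcat β w

/-- A subset of `Equiv.Perm Cantor` that is closed under the group operations. -/
def IsSubgroupSet (M : Set (Equiv.Perm Cantor)) : Prop :=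
  (1 : Equiv.Perm Cantor) ∈ M ∧ (∀ g ∈ M, ∀ h ∈ M, g * h ∈ M) ∧ ∀ g ∈ M, g⁻¹ ∈ M

/-- `M` is a maximal subgroup of Thompson's group `V`. -/
def IsMaximalSubgroupOfV (M : Set (Equiv.Perm Cantor)) : Prop :=
  IsSubgroupSet M ∧ M ⊆ VSet ∧ M ≠ VSet ∧
    ∀ H : Set (Equiv.Perm Cantor),
      IsSubgroupSet H → M ⊆ H → H ⊆ VSet → H = M ∨ H = VSet

/-- A relation on addresses is coherent if `α ∼ β` implies `α0 ∼ β0` and `α1 ∼ β1`. -/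
def Coherent (r : Addr → Addr → Prop) : Prop :=
  ∀ α β, r α β → r (α ++ [false]) (β ++ [false]) ∧ r (α ++ [true]) (β ++ [true])

/-- A relation on addresses is reduced if `α0 ∼ β0` and `α1 ∼ β1` imply `α ∼ β`. -/
def Reduced (r : Addr → Addr → Prop) : Prop :=
  ∀ α β, r (α ++ [false]) (β ++ [false]) → r (α ++ [true]) (β ++ [true]) → r α β

/-- A type system: a coherent and reduced equivalence relation on addresses
(identified with the partition of `Ω` into its classes). -/
def IsTypeSystem (r : Addr → Addr → Prop) : Prop :=
  Equivalence r ∧ Coherent r ∧ Reduced r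

/-- `g` fixes the parts of `r`: for all but finitely many addresses `α`, the image
`α ^ g` is defined and equivalent to `α`. -/
def FixesParts (r : Addr → Addr → Prop) (g : Equiv.Perm Cantor) : Prop :=
  { α : Addr | ¬ ∃ β, actsOn g α β ∧ r α β }.Finite

/-- `g` stabilizes `r`: on some cofinite set of addresses, `α ^ g` is defined and `g`
preserves equivalence and inequivalence of addresses. -/
def Stabilizes (r : Addr → Addr → Prop) (g : Equiv.Perm Cantor) : Prop :=
  ∃ Ω₀ : Set Addr, Ω₀ᶜ.Finite ∧ (∀ α ∈ Ω₀, ∃ β, actsOn g α β) ∧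
    ∀ α ∈ Ω₀, ∀ α' ∈ Ω₀, ∀ β β', actsOn g α β → actsOn g α' β' → (r α α' ↔ r β β')

/-- `Fix_V(𝒫)`: the elements of Thompson's group `V` fixing the parts of `r`. -/
def FixSet (r : Addr → Addr → Prop) : Set (Equiv.Perm Cantor) :=
  { g | IsPrefixSubst g ∧ FixesParts r g }

/-- `Stab_V(𝒫)`: the elements of Thompson's group `V` stabilizing `r`. -/
def StabSet (r : Addr → Addr → Prop) : Set (Equiv.Perm Cantor) :=
  { g | IsPrefixSubst g ∧ Stabilizes r g }

/-- The type system of `s` is a quotient of that of `r`. -/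
def IsQuotientOf (s r : Addr → Addr → Prop) : Prop :=
  IsTypeSystem s ∧ ∀ α β, r α β → s α β

/-- A simple type system: the universal relation is a proper quotient, and every
quotient is either the type system itself or the universal one. -/
def SimpleTS (r : Addr → Addr → Prop) : Prop :=
  IsTypeSystem r ∧ (∃ α β : Addr, ¬ r α β) ∧
    ∀ s : Addr → Addr → Prop, IsQuotientOf s r →
      (∀ α β, s α β ↔ r α β) ∨ ∀ α β, s α β

/-- The type (equivalence class) of the address `α`. -/
def typeOf (r : Addr → Addr → Prop) (α : Addr) : Set Addr := { β | r α β }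

/-! ### Words and cones -/

/-- Incomparability of addresses in the prefix order, i.e. disjointness of their cones. -/
def Perp (α β : Addr) : Prop := ¬ α <+: β ∧ ¬ β <+: α

lemma wcat_nil (w : Cantor) : wcat [] w = w := by
  funext n; simp [wcat]

lemma wcat_cons_zero (a : Bool) (α : Addr) (w : Cantor) : wcat (a :: α) w 0 = a := by
  simp [wcat]

lemma wcat_cons_succ (a : Bool) (α : Addr) (w : Cantor) (n : ℕ) :
    wcat (a :: α) w (n + 1) = wcat α w n := by
  simp [wcat]

lemma wcat_append (α β : Addr) (w : Cantor) : wcat (α ++ β) w = wcat α (wcat β w) := by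
  induction α with
  | nil => simp [wcat_nil]
  | cons a α ih =>
    funext n
    cases n with
    | zero => simp [wcat_cons_zero]
    | succ n => rw [List.cons_append, wcat_cons_succ, wcat_cons_succ, ih]

lemma wcat_eq_of_le {α β : Addr} {w v : Cantor} (hl : α.length ≤ β.length)
    (h : wcat α w = wcat β v) : ∃ γ, β = α ++ γ ∧ w = wcat γ v := by
  induction α generalizing β with
  | nil => exact ⟨β, rfl, by rw [← h, wcat_nil]⟩
  | cons a α ih =>
    cases β with
    | nil => simp at hl
    | cons b β =>
      have h0 := congrFun h 0
      rw [wcat_cons_zero, wcat_cons_zero] at h0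
      have h1 : wcat α w = wcat β v := by
        funext n
        have := congrFun h (n + 1)
        rwa [wcat_cons_succ, wcat_cons_succ] at this
      obtain ⟨γ, hγ, hw⟩ := ih (by simpa using hl) h1
      exact ⟨γ, by rw [hγ, h0]; rfl, hw⟩

lemma wcat_inj {α : Addr} {w v : Cantor} (h : wcat α w = wcat α v) : w = v := by
  obtain ⟨γ, hγ, hw⟩ := wcat_eq_of_le le_rfl h
  have : γ = [] := by simpa using hγ
  rw [hw, this, wcat_nil]

lemma exists_wcat (n : ℕ) (w : Cantor) : ∃ α v, α.length = n ∧ w = wcat α v := by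
  induction n generalizing w with
  | zero => exact ⟨[], w, rfl, (wcat_nil w).symm⟩
  | succ n ih =>
    obtain ⟨α, v, hα, hv⟩ := ih (fun n => w (n + 1))
    refine ⟨w 0 :: α, v, by simp [hα], ?_⟩
    funext k
    cases k with
    | zero => rw [wcat_cons_zero]
    | succ k => rw [wcat_cons_succ, ← hv]

lemma eq_of_wcat_eq {α β : Addr} (h : ∀ w, wcat α w = wcat β w) : α = β := by
  wlog hl : α.length ≤ β.length generalizing α β
  · exact (this (fun w => (h w).symm) (by omega)).symm
  -- `β = α ++ γ` with `γ w = w` for all `w`; a constant word `w` shows that `γ` is empty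
  obtain ⟨γ, hγ, -⟩ := wcat_eq_of_le hl (h fun _ => false)
  cases γ with
  | nil => simpa using hγ.symm
  | cons c γ =>
    have h1 := h (fun _ => !c)
    rw [hγ, wcat_append] at h1
    have h2 := congrFun (wcat_inj h1) 0
    rw [wcat_cons_zero] at h2
    simp at h2

lemma Perp.symm {α β : Addr} (h : Perp α β) : Perp β α := ⟨h.2, h.1⟩

lemma Perp.ne {α β : Addr} (h : Perp α β) : α ≠ β := by
  rintro rfl; exact h.1 List.prefix_rfl

lemma Perp.wcat_ne {α β : Addr} (h : Perp α β) (w v : Cantor) : wcat α w ≠ wcat β v := by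
  intro e
  rcases le_total α.length β.length with hl | hl
  · obtain ⟨γ, hγ, -⟩ := wcat_eq_of_le hl e
    exact h.1 ⟨γ, hγ.symm⟩
  · obtain ⟨γ, hγ, -⟩ := wcat_eq_of_le hl e.symm
    exact h.2 ⟨γ, hγ.symm⟩

lemma perp_of_wcat_ne {α β : Addr} (h : ∀ w v, wcat α w ≠ wcat β v) : Perp α β := by
  constructor
  · rintro ⟨γ, rfl⟩
    exact h (wcat γ fun _ => false) (fun _ => false) (wcat_append _ _ _).symm
  · rintro ⟨γ, rfl⟩
    exact h (fun _ => false) (wcat γ fun _ => false) (wcat_append _ _ _)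

lemma Perp.append {α β : Addr} (h : Perp α β) (γ δ : Addr) : Perp (α ++ γ) (β ++ δ) := by
  apply perp_of_wcat_ne
  intro w v
  rw [wcat_append, wcat_append]
  exact h.wcat_ne _ _

lemma Perp.append_left {α β : Addr} (h : Perp α β) (γ : Addr) : Perp (α ++ γ) β := by
  simpa using h.append γ []

lemma Perp.append_right {α β : Addr} (h : Perp α β) (γ : Addr) : Perp α (β ++ γ) := by
  simpa using h.append [] γ

lemma perp_children (α : Addr) : Perp (α ++ [false]) (α ++ [true]) := by
  constructor <;> simp [List.prefix_append_right_inj]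

lemma perp_of_length_eq {α β : Addr} (hl : α.length = β.length) (h : α ≠ β) : Perp α β :=
  ⟨fun hp => h (hp.eq_of_length hl), fun hp => h (hp.eq_of_length hl.symm).symm⟩

lemma exists_append_of_not_perp {α β : Addr} (hl : α.length ≤ β.length) (h : ¬ Perp α β) :
    ∃ γ, β = α ++ γ := by
  unfold Perp at h
  rw [not_and_or, not_not, not_not] at h
  rcases h with ⟨γ, hγ⟩ | ⟨γ, hγ⟩
  · exact ⟨γ, hγ.symm⟩
  · refine ⟨[], ?_⟩
    have : γ = [] := by
      have := congrArg List.length hγ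
      simp only [List.length_append] at this
      exact List.length_eq_zero_iff.1 (by omega)
    subst this
    simpa using hγ

/-- Below any address `β` there is room away from a few sufficiently long words. -/
lemma exists_room (β : Addr) (L : List Addr) (hL : L.length < 8)
    (hlen : ∀ α ∈ L, β.length + 3 ≤ α.length) : ∃ μ, ∀ α ∈ L, Perp (β ++ μ) α := by
  classical
  -- one of the eight extensions of `β` by three letters is not a prefix of a word in `L`
  let W : Finset Addr := Finset.univ.image (fun v : List.Vector Bool 3 => β ++ v.1)
  have hW : W.card = 8 := by
    rw [Finset.card_image_of_injective]
    · simp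
    · intro u v huv
      exact Subtype.ext (by simpa using huv)
  let Z : Finset Addr := (L.map (List.take (β.length + 3))).toFinset
  have hZ : Z.card < W.card := by
    rw [hW]
    refine lt_of_le_of_lt (List.toFinset_card_le _) (by simpa using hL)
  obtain ⟨x, hx, hxZ⟩ := Finset.exists_mem_notMem_of_card_lt_card hZ
  obtain ⟨v, -, rfl⟩ := Finset.mem_image.1 hx
  refine ⟨v.1, fun α hα => ?_⟩
  by_contra hp
  have hvl : (β ++ v.1).length = β.length + 3 := by
    rw [List.length_append]; exact congrArg _ v.2
  obtain ⟨γ, hγ⟩ := exists_append_of_not_perp (by rw [hvl]; exact hlen α hα) hp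
  apply hxZ
  simp only [Z, List.mem_toFinset, List.mem_map]
  exact ⟨α, hα, by rw [hγ, List.take_left' hvl]⟩

/-! ### The partial action on addresses, and the group `V` -/

lemma perm_apply_inv (g : Equiv.Perm Cantor) (w : Cantor) : g (g⁻¹ w) = w :=
  g.apply_symm_apply w

lemma actsOn.append {g : Equiv.Perm Cantor} {α β : Addr} (h : actsOn g α β) (γ : Addr) :
    actsOn g (α ++ γ) (β ++ γ) := by
  intro w; rw [wcat_append, wcat_append]; exact h _

lemma actsOn.mul {g h : Equiv.Perm Cantor} {α β γ : Addr} (hh : actsOn h α β)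
    (hg : actsOn g β γ) : actsOn (g * h) α γ := by
  intro w; rw [Equiv.Perm.mul_apply, hh, hg]

lemma actsOn.inv {g : Equiv.Perm Cantor} {α β : Addr} (h : actsOn g α β) : actsOn g⁻¹ β α := by
  intro w; rw [Equiv.Perm.inv_eq_iff_eq, h]

lemma actsOn_one (α : Addr) : actsOn 1 α α := fun _ => rfl

lemma actsOn.unique {g : Equiv.Perm Cantor} {α β β' : Addr} (h : actsOn g α β)
    (h' : actsOn g α β') : β = β' :=
  eq_of_wcat_eq fun w => by rw [← h w, h' w]

lemma actsOn.perp {g : Equiv.Perm Cantor} {α β α' β' : Addr} (h : actsOn g α β)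
    (h' : actsOn g α' β') (hp : Perp α α') : Perp β β' := by
  apply perp_of_wcat_ne
  intro w v e
  rw [← h, ← h'] at e
  exact hp.wcat_ne _ _ (g.injective e)

lemma isPrefixSubst_iff (g : Equiv.Perm Cantor) :
    IsPrefixSubst g ↔ ∃ N : ℕ, ∀ α : Addr, N ≤ α.length → ∃ β, actsOn g α β := by
  constructor
  · rintro ⟨n, A, B, -, hA, -, -, hg⟩
    refine ⟨Finset.univ.sup fun i => (A i).length, fun α hα => ?_⟩
    have hm : wcat α (fun _ => false) ∈ ⋃ i, cone (A i) := by rw [hA]; trivial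
    obtain ⟨i, w, hw⟩ := Set.mem_iUnion.1 hm
    obtain ⟨γ, hγ, -⟩ := wcat_eq_of_le
      ((Finset.le_sup (f := fun i => (A i).length) (Finset.mem_univ i)).trans hα) hw
    exact ⟨B i ++ γ, by rw [hγ]; exact actsOn.append (hg i) γ⟩
  · rintro ⟨N, hN⟩
    let e := Fintype.equivFin (List.Vector Bool N)
    let A : Fin (Fintype.card (List.Vector Bool N)) → Addr := fun i => (e.symm i).1
    have hAl : ∀ i, (A i).length = N := fun i => (e.symm i).2
    choose B hB using fun i => hN (A i) (hAl i).ge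
    have hAp : ∀ i j, i ≠ j → Perp (A i) (A j) := by
      intro i j hij
      refine perp_of_length_eq (by rw [hAl, hAl]) fun h => hij ?_
      exact e.symm.injective (Subtype.ext h)
    have hAc : ∀ w, ∃ i v, w = wcat (A i) v := by
      intro w
      obtain ⟨α, v, hα, hw⟩ := exists_wcat N w
      obtain ⟨x, hx⟩ : ∃ x : List.Vector Bool N, x.1 = α := ⟨⟨α, hα⟩, rfl⟩
      refine ⟨e x, v, ?_⟩
      change w = wcat (e.symm (e x)).1 v
      rw [Equiv.symm_apply_apply, hx, hw]
    refine ⟨_, A, B, ?_, ?_, ?_, ?_, hB⟩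
    · intro i j hij
      rw [Set.disjoint_left]
      rintro _ ⟨w, rfl⟩ ⟨v, hv⟩
      exact (hAp i j hij).wcat_ne _ _ hv.symm
    · refine Set.eq_univ_of_forall fun w => ?_
      obtain ⟨i, v, rfl⟩ := hAc w
      exact Set.mem_iUnion.2 ⟨i, v, rfl⟩
    · intro i j hij
      rw [Set.disjoint_left]
      rintro _ ⟨w, rfl⟩ ⟨v, hv⟩
      exact ((hB i).perp (hB j) (hAp i j hij)).wcat_ne _ _ hv.symm
    · refine Set.eq_univ_of_forall fun w => ?_
      obtain ⟨i, v, hv⟩ := hAc (g⁻¹ w)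
      refine Set.mem_iUnion.2 ⟨i, v, ?_⟩
      rw [← hB i, ← hv, perm_apply_inv]

lemma IsPrefixSubst.exists_deep {g : Equiv.Perm Cantor} (hg : IsPrefixSubst g) (K : ℕ) :
    ∃ N : ℕ, ∀ α : Addr, N ≤ α.length → ∃ β, actsOn g α β ∧ K ≤ β.length := by
  obtain ⟨N, hN⟩ := (isPrefixSubst_iff g).1 hg
  refine ⟨N + K, fun α hα => ?_⟩
  obtain ⟨β, hβ⟩ := hN (α.take N) (by rw [List.length_take]; omega)
  refine ⟨β ++ α.drop N, ?_, ?_⟩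
  · have := hβ.append (α.drop N)
    rwa [List.take_append_drop] at this
  · rw [List.length_append, List.length_drop]; omega

lemma IsPrefixSubst.one : IsPrefixSubst 1 :=
  (isPrefixSubst_iff 1).2 ⟨0, fun α _ => ⟨α, actsOn_one α⟩⟩

lemma IsPrefixSubst.inv {g : Equiv.Perm Cantor} (hg : IsPrefixSubst g) : IsPrefixSubst g⁻¹ := by
  obtain ⟨n, A, B, h1, h2, h3, h4, h5⟩ := hg
  exact ⟨n, B, A, h3, h4, h1, h2, fun i => actsOn.inv (h5 i)⟩

lemma IsPrefixSubst.mul {g h : Equiv.Perm Cantor} (hg : IsPrefixSubst g)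
    (hh : IsPrefixSubst h) : IsPrefixSubst (g * h) := by
  obtain ⟨K, hK⟩ := (isPrefixSubst_iff g).1 hg
  obtain ⟨N, hN⟩ := hh.exists_deep K
  refine (isPrefixSubst_iff _).2 ⟨N, fun α hα => ?_⟩
  obtain ⟨β, hβ, hl⟩ := hN α hα
  obtain ⟨γ, hγ⟩ := hK β hl
  exact ⟨γ, hβ.mul hγ⟩

/-! ### Cone swaps -/

open Classical in
/-- The map exchanging the cones of `α` and `β` by the prefix substitutions `α ↦ β`, `β ↦ α` and
fixing all other points (meaningful when `α` and `β` are equal or incomparable). -/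
noncomputable def swapFun (α β : Addr) (w : Cantor) : Cantor :=
  if h : ∃ v, w = wcat α v then wcat β h.choose
  else if h : ∃ v, w = wcat β v then wcat α h.choose
  else w

lemma swapFun_left (α β : Addr) (v : Cantor) : swapFun α β (wcat α v) = wcat β v := by
  have h : ∃ v', wcat α v = wcat α v' := ⟨v, rfl⟩
  rw [swapFun, dif_pos h, ← wcat_inj h.choose_spec]

lemma swapFun_right {α β : Addr} (hp : α = β ∨ Perp α β) (v : Cantor) :
    swapFun α β (wcat β v) = wcat α v := by
  rcases hp with rfl | hp
  · exact swapFun_left α α v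
  · have h : ∃ v', wcat β v = wcat β v' := ⟨v, rfl⟩
    have h' : ¬ ∃ v', wcat β v = wcat α v' := fun ⟨v', e⟩ => hp.wcat_ne _ _ e.symm
    rw [swapFun, dif_neg h', dif_pos h, ← wcat_inj h.choose_spec]

lemma swapFun_other {α β : Addr} {w : Cantor} (h : ¬ ∃ v, w = wcat α v)
    (h' : ¬ ∃ v, w = wcat β v) : swapFun α β w = w := by
  rw [swapFun, dif_neg h, dif_neg h']

lemma swapFun_involutive {α β : Addr} (hp : α = β ∨ Perp α β) :
    Function.Involutive (swapFun α β) := by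
  intro w
  by_cases h : ∃ v, w = wcat α v
  · obtain ⟨v, rfl⟩ := h
    rw [swapFun_left, swapFun_right hp]
  by_cases h' : ∃ v, w = wcat β v
  · obtain ⟨v, rfl⟩ := h'
    rw [swapFun_right hp, swapFun_left]
  rw [swapFun_other h h', swapFun_other h h']

open Classical in
/-- The element of `V` exchanging the cones of two incomparable addresses. It is the identity if
the two addresses are equal; for distinct comparable addresses it is the junk value `1`. -/
noncomputable def coneSwap (α β : Addr) : Equiv.Perm Cantor :=
  if h : α = β ∨ Perp α β then (swapFun_involutive h).toPerm else 1

lemma coneSwap_apply {α β : Addr} (h : α = β ∨ Perp α β) (w : Cantor) :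
    coneSwap α β w = swapFun α β w := by
  rw [coneSwap, dif_pos h]; rfl

lemma coneSwap_left {α β : Addr} (h : α = β ∨ Perp α β) : actsOn (coneSwap α β) α β :=
  fun w => by rw [coneSwap_apply h, swapFun_left]

lemma coneSwap_right {α β : Addr} (h : α = β ∨ Perp α β) : actsOn (coneSwap α β) β α :=
  fun w => by rw [coneSwap_apply h, swapFun_right h]

lemma coneSwap_other {α β γ : Addr} (h : α = β ∨ Perp α β) (h1 : Perp γ α) (h2 : Perp γ β) :
    actsOn (coneSwap α β) γ γ := fun w => by
  rw [coneSwap_apply h, swapFun_other]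
  · rintro ⟨v, e⟩; exact h1.wcat_ne _ _ e
  · rintro ⟨v, e⟩; exact h2.wcat_ne _ _ e

lemma coneSwap_fix {α β : Addr} (h : α = β ∨ Perp α β) {w : Cantor} (h1 : ¬ ∃ v, w = wcat α v)
    (h2 : ¬ ∃ v, w = wcat β v) : coneSwap α β w = w := by
  rw [coneSwap_apply h, swapFun_other h1 h2]

/-- A permutation acting on two cones as the cone swap and trivially elsewhere is the swap. -/
lemma eq_coneSwap {α β : Addr} (h : α = β ∨ Perp α β) {g : Equiv.Perm Cantor}
    (h1 : actsOn g α β) (h2 : actsOn g β α)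
    (h3 : ∀ w, (¬ ∃ v, w = wcat α v) → (¬ ∃ v, w = wcat β v) → g w = w) :
    g = coneSwap α β := by
  ext1 w
  by_cases hα : ∃ v, w = wcat α v
  · obtain ⟨v, rfl⟩ := hα
    rw [h1, coneSwap_left h]
  by_cases hβ : ∃ v, w = wcat β v
  · obtain ⟨v, rfl⟩ := hβ
    rw [h2, coneSwap_right h]
  rw [h3 w hα hβ, coneSwap_fix h hα hβ]

lemma coneSwap_comm {α β : Addr} (h : Perp α β) : coneSwap α β = coneSwap β α :=
  eq_coneSwap (Or.inr h.symm) (coneSwap_right (Or.inr h)) (coneSwap_left (Or.inr h))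
    fun _ h1 h2 => coneSwap_fix (Or.inr h) h2 h1

lemma coneSwap_self (α : Addr) : coneSwap α α = 1 :=
  (eq_coneSwap (Or.inl rfl) (actsOn_one α) (actsOn_one α) fun _ _ _ => rfl).symm

lemma coneSwap_conj {h : Equiv.Perm Cantor} {α β α' β' : Addr} (hp : Perp α β)
    (hα : actsOn h α α') (hβ : actsOn h β β') :
    h * coneSwap α β * h⁻¹ = coneSwap α' β' := by
  refine eq_coneSwap (Or.inr (hα.perp hβ hp)) ?_ ?_ ?_
  · exact hα.inv.mul ((coneSwap_left (Or.inr hp)).mul hβ)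
  · exact hβ.inv.mul ((coneSwap_right (Or.inr hp)).mul hα)
  · intro w h1 h2
    rw [Equiv.Perm.mul_apply, Equiv.Perm.mul_apply, coneSwap_fix (Or.inr hp),
      perm_apply_inv]
    · rintro ⟨v, e⟩
      exact h1 ⟨v, by rw [← hα, ← e, perm_apply_inv]⟩
    · rintro ⟨v, e⟩
      exact h2 ⟨v, by rw [← hβ, ← e, perm_apply_inv]⟩

lemma exists_letter_tail (w : Cantor) : ∃ c v, w = wcat [c] v := by
  obtain ⟨α, v, hα, hw⟩ := exists_wcat 1 w
  obtain ⟨c, rfl⟩ := List.length_eq_one_iff.1 hα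
  exact ⟨c, v, hw⟩

lemma coneSwap_split {α β : Addr} (hp : Perp α β) :
    coneSwap (α ++ [false]) (β ++ [false]) * coneSwap (α ++ [true]) (β ++ [true]) =
      coneSwap α β := by
  have key : ∀ c : Bool, Perp (α ++ [c]) (α ++ [!c]) ∧ Perp (β ++ [c]) (β ++ [!c]) := by
    rintro (_ | _)
    · exact ⟨perp_children _, perp_children _⟩
    · exact ⟨(perp_children _).symm, (perp_children _).symm⟩
  have hF : Perp (α ++ [false]) (β ++ [false]) := hp.append _ _
  have hT : Perp (α ++ [true]) (β ++ [true]) := hp.append _ _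
  have hFT : Perp (α ++ [false]) (β ++ [true]) := hp.append _ _
  have hTF : Perp (α ++ [true]) (β ++ [false]) := hp.append _ _
  refine eq_coneSwap (Or.inr hp) ?_ ?_ ?_
  · intro w
    obtain ⟨c, v, rfl⟩ := exists_letter_tail w
    rw [← wcat_append, ← wcat_append]
    cases c
    · exact (coneSwap_other (Or.inr hT) (key false).1 hFT).mul (coneSwap_left (Or.inr hF)) v
    · exact (coneSwap_left (Or.inr hT)).mul
        (coneSwap_other (Or.inr hF) hFT.symm (key true).2) v
  · intro w
    obtain ⟨c, v, rfl⟩ := exists_letter_tail w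
    rw [← wcat_append, ← wcat_append]
    cases c
    · exact (coneSwap_other (Or.inr hT) hTF.symm (key false).2).mul
        (coneSwap_right (Or.inr hF)) v
    · exact (coneSwap_right (Or.inr hT)).mul
        (coneSwap_other (Or.inr hF) (key true).1 hTF) v
  · intro w h1 h2
    have hα : ∀ c, ¬ ∃ v, w = wcat (α ++ [c]) v := by
      rintro c ⟨v, e⟩; exact h1 ⟨_, e.trans (wcat_append _ _ _)⟩
    have hβ : ∀ c, ¬ ∃ v, w = wcat (β ++ [c]) v := by
      rintro c ⟨v, e⟩; exact h2 ⟨_, e.trans (wcat_append _ _ _)⟩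
    rw [Equiv.Perm.mul_apply, coneSwap_fix (Or.inr hT) (hα _) (hβ _),
      coneSwap_fix (Or.inr hF) (hα _) (hβ _)]

/-! ### Cone swaps generate `V` -/

lemma IsSubgroupSet.swap_conj {H : Set (Equiv.Perm Cantor)} (hH : IsSubgroupSet H)
    {h : Equiv.Perm Cantor} (hh : h ∈ H) {α β α' β' : Addr} (hp : Perp α β)
    (hs : coneSwap α β ∈ H) (hα : actsOn h α α') (hβ : actsOn h β β') :
    coneSwap α' β' ∈ H := by
  rw [← coneSwap_conj hp hα hβ]
  exact hH.2.1 _ (hH.2.1 _ hh _ hs) _ (hH.2.2 _ hh)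

lemma IsSubgroupSet.swap_trans {H : Set (Equiv.Perm Cantor)} (hH : IsSubgroupSet H)
    {α β γ : Addr} (hαβ : Perp α β) (hβγ : Perp β γ) (hαγ : Perp α γ)
    (h1 : coneSwap α β ∈ H) (h2 : coneSwap β γ ∈ H) : coneSwap α γ ∈ H :=
  hH.swap_conj h2 hαβ h1 (coneSwap_other (Or.inr hβγ) hαβ hαγ) (coneSwap_left (Or.inr hβγ))

/-- A complete finite prefix code: the cones of its members partition Cantor space. -/
def IsCode (F : Finset Addr) : Prop :=
  (∀ α ∈ F, ∀ β ∈ F, α ≠ β → Perp α β) ∧ ∀ w, ∃ α ∈ F, ∃ v, w = wcat α v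

/-- A nontrivial complete prefix code contains two siblings: a longest member and its sibling. -/
lemma IsCode.exists_caret {F : Finset Addr} (hF : IsCode F) (hn : ([] : Addr) ∉ F) :
    ∃ α : Addr, α ++ [false] ∈ F ∧ α ++ [true] ∈ F := by
  obtain ⟨α₀, hα₀, -⟩ := hF.2 fun _ => false
  obtain ⟨μ, hμ, hmax⟩ := Finset.exists_max_image F List.length ⟨α₀, hα₀⟩
  rcases List.eq_nil_or_concat μ with rfl | ⟨α, c, rfl⟩
  · exact absurd hμ hn
  rw [List.concat_eq_append] at hμ hmax
  have hsib : α ++ [!c] ∈ F := by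
    obtain ⟨ν, hν, v, hv⟩ := hF.2 (wcat (α ++ [!c]) fun _ => false)
    rcases Nat.lt_or_ge α.length ν.length with hl | hl
    · have := hmax ν hν
      obtain ⟨γ, rfl, -⟩ := wcat_eq_of_le (by simpa using hl) hv
      have hγ : γ = [] := by
        simp only [List.length_append, List.length_singleton] at this
        exact List.length_eq_zero_iff.1 (by omega)
      simpa [hγ] using hν
    · rw [wcat_append] at hv
      obtain ⟨γ, rfl, -⟩ := wcat_eq_of_le hl hv.symm
      exfalso
      refine (hF.1 ν hν _ hμ ?_).1 ⟨γ ++ [c], by simp⟩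
      intro h
      have := congrArg List.length h
      simp only [List.length_append, List.length_singleton] at this
      omega
  cases c
  · exact ⟨α, by simpa using hμ, by simpa using hsib⟩
  · exact ⟨α, by simpa using hsib, by simpa using hμ⟩

/-- Merging two siblings of a complete prefix code into their parent. -/
lemma IsCode.merge {F : Finset Addr} (hF : IsCode F) {α : Addr} (h0 : α ++ [false] ∈ F)
    (h1 : α ++ [true] ∈ F) :
    IsCode (insert α ((F.erase (α ++ [false])).erase (α ++ [true]))) := by
  have key : ∀ β ∈ (F.erase (α ++ [false])).erase (α ++ [true]), Perp α β := by
    intro β hβ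
    rw [Finset.mem_erase, Finset.mem_erase] at hβ
    obtain ⟨hb1, hb0, hb⟩ := hβ
    apply perp_of_wcat_ne
    intro w v e
    obtain ⟨c, w, rfl⟩ := exists_letter_tail w
    rw [← wcat_append] at e
    cases c
    · exact (hF.1 _ h0 _ hb hb0.symm).wcat_ne _ _ e
    · exact (hF.1 _ h1 _ hb hb1.symm).wcat_ne _ _ e
  constructor
  · intro β hβ γ hγ hne
    rw [Finset.mem_insert] at hβ hγ
    rcases hβ with rfl | hβ <;> rcases hγ with rfl | hγ
    · exact absurd rfl hne
    · exact key γ hγ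
    · exact (key β hβ).symm
    · exact hF.1 β (Finset.mem_of_mem_erase (Finset.mem_of_mem_erase hβ)) γ
        (Finset.mem_of_mem_erase (Finset.mem_of_mem_erase hγ)) hne
  · intro w
    obtain ⟨β, hβ, v, hv⟩ := hF.2 w
    by_cases e0 : β = α ++ [false]
    · exact ⟨α, Finset.mem_insert_self _ _, _, by rw [hv, e0, wcat_append]⟩
    by_cases e1 : β = α ++ [true]
    · exact ⟨α, Finset.mem_insert_self _ _, _, by rw [hv, e1, wcat_append]⟩
    exact ⟨β, Finset.mem_insert_of_mem
      (Finset.mem_erase.2 ⟨e1, Finset.mem_erase.2 ⟨e0, hβ⟩⟩), v, hv⟩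

lemma IsCode.card_merge {F : Finset Addr} {α : Addr} (h0 : α ++ [false] ∈ F)
    (h1 : α ++ [true] ∈ F) :
    (insert α ((F.erase (α ++ [false])).erase (α ++ [true]))).card < F.card := by
  have h01 : α ++ [true] ∈ F.erase (α ++ [false]) :=
    Finset.mem_erase.2 ⟨(perp_children α).symm.ne, h1⟩
  have := Finset.card_insert_le α ((F.erase (α ++ [false])).erase (α ++ [true]))
  rw [Finset.card_erase_of_mem h01, Finset.card_erase_of_mem h0] at this
  have h2 : 1 < F.card := Finset.one_lt_card.2 ⟨_, h0, _, h1, (perp_children α).ne⟩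
  omega

lemma actsOn_of_children {g : Equiv.Perm Cantor} {α β : Addr}
    (h0 : actsOn g (α ++ [false]) (β ++ [false])) (h1 : actsOn g (α ++ [true]) (β ++ [true])) :
    actsOn g α β := by
  intro w
  obtain ⟨c, w, rfl⟩ := exists_letter_tail w
  rw [← wcat_append, ← wcat_append]
  cases c
  · exact h0 w
  · exact h1 w

/-- The images of a complete prefix code under an element acting on it form such a code. -/
lemma IsCode.image {F : Finset Addr} (hF : IsCode F) {g : Equiv.Perm Cantor} {f : Addr → Addr}
    (hf : ∀ α ∈ F, actsOn g α (f α)) : IsCode (F.image f) := by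
  constructor
  · intro _ hfβ _ hfγ hne
    obtain ⟨β, hβ, rfl⟩ := Finset.mem_image.1 hfβ
    obtain ⟨γ, hγ, rfl⟩ := Finset.mem_image.1 hfγ
    refine (hf β hβ).perp (hf γ hγ) (hF.1 β hβ γ hγ ?_)
    rintro rfl; exact hne rfl
  · intro w
    obtain ⟨α, hα, v, hv⟩ := hF.2 (g⁻¹ w)
    exact ⟨f α, Finset.mem_image_of_mem f hα, v, by
      rw [← hf α hα, ← hv, perm_apply_inv]⟩

lemma IsCode.actsOn_swap {B : Finset Addr} (hB : IsCode B) {p q x : Addr} (hp : p ∈ B)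
    (hq : q ∈ B) (hx : x ∈ B) : actsOn (coneSwap p q) x (Equiv.swap p q x) := by
  have hpq : p = q ∨ Perp p q := by
    by_cases h : p = q
    · exact Or.inl h
    · exact Or.inr (hB.1 p hp q hq h)
  by_cases h1 : x = p
  · rw [h1, Equiv.swap_apply_left]; exact coneSwap_left hpq
  by_cases h2 : x = q
  · rw [h2, Equiv.swap_apply_right]; exact coneSwap_right hpq
  rw [Equiv.swap_apply_of_ne_of_ne h1 h2]
  exact coneSwap_other hpq (hB.1 x hx p hp h1) (hB.1 x hx q hq h2)

lemma swap_mem_finset {B : Finset Addr} {p q x : Addr} (hp : p ∈ B)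
    (hq : q ∈ B) (hx : x ∈ B) : Equiv.swap p q x ∈ B := by
  rw [Equiv.swap_apply_def]; split_ifs <;> assumption

/-- Induction on the size of a complete prefix code `F` on which `g` acts: after composing `g` with
two cone swaps, a pair of siblings of `F` is carried to a pair of siblings of the image code, and
both pairs can be merged. -/
lemma mem_of_isCode {H : Set (Equiv.Perm Cantor)} (hH : IsSubgroupSet H)
    (hswap : ∀ α β, Perp α β → coneSwap α β ∈ H) (n : ℕ) :
    ∀ (F : Finset Addr) (g : Equiv.Perm Cantor), F.card ≤ n → IsCode F →
      (∀ α ∈ F, ∃ β, actsOn g α β) → g ∈ H := by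
  have hswap' : ∀ (B : Finset Addr), IsCode B → ∀ p ∈ B, ∀ q ∈ B, coneSwap p q ∈ H := by
    intro B hB p hp q hq
    by_cases h : p = q
    · rw [h, coneSwap_self]; exact hH.1
    · exact hswap p q (hB.1 p hp q hq h)
  induction n with
  | zero =>
    intro F g hc hF
    obtain ⟨α, hα, -⟩ := hF.2 fun _ => false
    rw [Finset.card_eq_zero.1 (Nat.le_zero.1 hc)] at hα
    simp at hα
  | succ n ih =>
    intro F g hc hF hg
    choose! f hf using hg
    have hB := hF.image hf
    -- `g = 1` as soon as `F` or its image is the trivial code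
    have triv : ∀ α β, actsOn g α β → (∀ w, ∃ v, w = wcat α v) → (∀ w, ∃ v, w = wcat β v) →
        g ∈ H := by
      intro α β h h1 h2
      have e : ∀ γ : Addr, (∀ w, ∃ v, w = wcat γ v) → γ = [] := by
        intro γ hγ
        cases γ with
        | nil => rfl
        | cons c γ =>
          obtain ⟨v, hv⟩ := hγ fun _ => !c
          have := congrFun hv 0
          rw [wcat_cons_zero] at this
          simp at this
      rw [e α h1, e β h2] at h
      have : g = 1 := by
        ext1 w
        have := h w
        rwa [wcat_nil] at this
      rw [this]; exact hH.1
    by_cases hnF : ([] : Addr) ∈ F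
    · refine triv [] (f []) (hf _ hnF) (fun w => ⟨w, (wcat_nil w).symm⟩) fun w => ?_
      refine ⟨g⁻¹ w, ?_⟩
      rw [← hf _ hnF, wcat_nil, perm_apply_inv]
    by_cases hnB : ([] : Addr) ∈ F.image f
    · obtain ⟨α, hα, e⟩ := Finset.mem_image.1 hnB
      have hfα := hf α hα
      rw [e] at hfα
      refine triv α [] hfα (fun w => ⟨g w, ?_⟩) fun w => ⟨w, (wcat_nil w).symm⟩
      apply g.injective
      rw [hfα, wcat_nil]
    obtain ⟨α, hα0, hα1⟩ := hF.exists_caret hnF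
    obtain ⟨β, hβ0, hβ1⟩ := hB.exists_caret hnB
    set B := F.image f with hBdef
    have hfB : ∀ x ∈ F, f x ∈ B := fun x hx => Finset.mem_image_of_mem f hx
    set p := f (α ++ [false]) with hp
    set q := Equiv.swap p (β ++ [false]) (f (α ++ [true])) with hq
    have hpB : p ∈ B := hfB _ hα0
    have hqB : q ∈ B := swap_mem_finset hpB hβ0 (hfB _ hα1)
    have hne : f (α ++ [true]) ≠ p := by
      intro e
      have h1 := hf _ hα1
      rw [e] at h1
      exact ((hf _ hα0).perp h1 (perp_children α)).ne rfl
    have hq0 : q ≠ β ++ [false] := by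
      intro e
      rw [hq, Equiv.swap_apply_eq_iff, Equiv.swap_apply_right] at e
      exact hne e
    set k := coneSwap q (β ++ [true]) * coneSwap p (β ++ [false]) with hk
    have hkH : k ∈ H :=
      hH.2.1 _ (hswap' B hB q hqB _ hβ1) _ (hswap' B hB p hpB _ hβ0)
    have hkB : ∀ x ∈ B, actsOn k x
        (Equiv.swap q (β ++ [true]) (Equiv.swap p (β ++ [false]) x)) := fun x hx =>
      (hB.actsOn_swap hpB hβ0 hx).mul
        (hB.actsOn_swap hqB hβ1 (swap_mem_finset hpB hβ0 hx))
    have hkg : k * g ∈ H := by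
      refine ih (insert α ((F.erase (α ++ [false])).erase (α ++ [true]))) (k * g) ?_
        (hF.merge hα0 hα1) ?_
      · have := IsCode.card_merge hα0 hα1
        omega
      · intro x hx
        rcases Finset.mem_insert.1 hx with rfl | hx
        · refine ⟨β, actsOn_of_children ?_ ?_⟩
          · have := (hf _ hα0).mul (hkB _ hpB)
            rwa [Equiv.swap_apply_left,
              Equiv.swap_apply_of_ne_of_ne hq0.symm (perp_children β).ne] at this
          · have := (hf _ hα1).mul (hkB _ (hfB _ hα1))
            rwa [← hq, Equiv.swap_apply_left] at this
        · have hxF := Finset.mem_of_mem_erase (Finset.mem_of_mem_erase hx)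
          exact ⟨_, (hf x hxF).mul (hkB _ (hfB x hxF))⟩
    have := hH.2.1 _ (hH.2.2 _ hkH) _ hkg
    rwa [inv_mul_cancel_left] at this

/-- A subgroup of `V` containing all swaps of small incomparable cones is all of `V`. -/
lemma eq_VSet_of_deep_swaps {H : Set (Equiv.Perm Cantor)} (hH : IsSubgroupSet H)
    (hV : H ⊆ VSet) (hswap : ∀ α β, Perp α β → ∃ N : ℕ, ∀ γ : Addr, γ.length = N →
      coneSwap (α ++ γ) (β ++ γ) ∈ H) : H = VSet := by
  have h1 : ∀ (N : ℕ) (α β : Addr), Perp α β → (∀ γ : Addr, γ.length = N →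
      coneSwap (α ++ γ) (β ++ γ) ∈ H) → coneSwap α β ∈ H := by
    intro N
    induction N with
    | zero => intro α β _ h; simpa using h [] rfl
    | succ N ih =>
      intro α β hp h
      rw [← coneSwap_split hp]
      refine hH.2.1 _ (ih _ _ (hp.append _ _) fun γ hγ => ?_) _
        (ih _ _ (hp.append _ _) fun γ hγ => ?_)
      · simpa using h (false :: γ) (by simp [hγ])
      · simpa using h (true :: γ) (by simp [hγ])
  refine Set.Subset.antisymm hV fun g hg => ?_
  obtain ⟨n, A, B, hA, hAc, -, -, hgA⟩ := hg
  refine mem_of_isCode hH (fun α β hp => ?_) _ (Finset.univ.image A) g le_rfl ⟨?_, ?_⟩ ?_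
  · obtain ⟨N, hN⟩ := hswap α β hp
    exact h1 N α β hp hN
  · intro α hα β hβ hne
    obtain ⟨i, -, rfl⟩ := Finset.mem_image.1 hα
    obtain ⟨j, -, rfl⟩ := Finset.mem_image.1 hβ
    apply perp_of_wcat_ne
    intro w v e
    refine Set.disjoint_left.1 (hA i j ?_) ⟨w, rfl⟩ ⟨v, e.symm⟩
    rintro rfl; exact hne rfl
  · intro w
    have hm : w ∈ ⋃ i, cone (A i) := by rw [hAc]; trivial
    obtain ⟨i, v, hv⟩ := Set.mem_iUnion.1 hm
    exact ⟨A i, Finset.mem_image_of_mem _ (Finset.mem_univ i), v, hv.symm⟩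
  · intro α hα
    obtain ⟨i, -, rfl⟩ := Finset.mem_image.1 hα
    exact ⟨B i, hgA i⟩

/-! ### Type systems and their stabilizers -/

lemma IsTypeSystem.append {r : Addr → Addr → Prop} (hr : IsTypeSystem r) {α β : Addr}
    (h : r α β) (γ : Addr) : r (α ++ γ) (β ++ γ) := by
  induction γ generalizing α β with
  | nil => simpa using h
  | cons c γ ih =>
    have h1 : r (α ++ [c]) (β ++ [c]) := by
      cases c
      · exact (hr.2.1 α β h).1
      · exact (hr.2.1 α β h).2
    simpa using ih h1

lemma IsTypeSystem.of_append {r : Addr → Addr → Prop} (hr : IsTypeSystem r) (n : ℕ)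
    {α β : Addr} (h : ∀ γ : Addr, γ.length = n → r (α ++ γ) (β ++ γ)) : r α β := by
  induction n generalizing α β with
  | zero => simpa using h [] rfl
  | succ n ih =>
    refine hr.2.2 α β (ih fun γ hγ => ?_) (ih fun γ hγ => ?_)
    · simpa using h (false :: γ) (by simp [hγ])
    · simpa using h (true :: γ) (by simp [hγ])

lemma isTypeSystem_true : IsTypeSystem fun _ _ => True :=
  ⟨⟨fun _ => trivial, fun _ => trivial, fun _ _ => trivial⟩, fun _ _ _ => ⟨trivial, trivial⟩,
    fun _ _ _ _ => trivial⟩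

lemma mem_stabSet_iff {r : Addr → Addr → Prop} {g : Equiv.Perm Cantor} :
    g ∈ StabSet r ↔ IsPrefixSubst g ∧ ∃ N : ℕ, ∀ α α' β β' : Addr, N ≤ α.length →
      N ≤ α'.length → actsOn g α β → actsOn g α' β' → (r α α' ↔ r β β') := by
  constructor
  · rintro ⟨hg, Ω₀, hfin, -, hΩ⟩
    refine ⟨hg, ?_⟩
    obtain ⟨N, hN⟩ := (hfin.image List.length).bddAbove
    have hmem : ∀ α : Addr, N + 1 ≤ α.length → α ∈ Ω₀ := by
      intro α hα
      by_contra h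
      have : α.length ≤ N := hN ⟨α, h, rfl⟩
      omega
    exact ⟨N + 1, fun α α' β β' h h' hβ hβ' =>
      hΩ α (hmem α h) α' (hmem α' h') β β' hβ hβ'⟩
  · rintro ⟨hg, N, hN⟩
    obtain ⟨N', hN'⟩ := (isPrefixSubst_iff g).1 hg
    refine ⟨hg, {α | max N N' ≤ α.length}, ?_, ?_, ?_⟩
    · refine (List.finite_length_lt Bool (max N N')).subset fun α hα => ?_
      have h : ¬ max N N' ≤ α.length := hα
      exact not_le.1 h
    · intro α hα
      exact hN' α ((le_max_right _ _).trans hα)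
    · intro α hα α' hα' β β' h h'
      exact hN α α' β β' ((le_max_left _ _).trans hα) ((le_max_left _ _).trans hα') h h'

lemma isSubgroupSet_stabSet (r : Addr → Addr → Prop) : IsSubgroupSet (StabSet r) := by
  refine ⟨?_, ?_, ?_⟩
  · refine mem_stabSet_iff.2 ⟨IsPrefixSubst.one, 0, fun α α' β β' _ _ h h' => ?_⟩
    rw [h.unique (actsOn_one α), h'.unique (actsOn_one α')]
  · intro g hg h hh
    obtain ⟨hgV, K, hK⟩ := mem_stabSet_iff.1 hg
    obtain ⟨hhV, N, hN⟩ := mem_stabSet_iff.1 hh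
    obtain ⟨N', hN'⟩ := hhV.exists_deep K
    refine mem_stabSet_iff.2 ⟨hgV.mul hhV, max N N', fun α α' γ γ' hα hα' h1 h1' => ?_⟩
    rw [max_le_iff] at hα hα'
    obtain ⟨β, hβ, hl⟩ := hN' α hα.2
    obtain ⟨β', hβ', hl'⟩ := hN' α' hα'.2
    rw [hN α α' β β' hα.1 hα'.1 hβ hβ']
    refine hK β β' γ γ' hl hl' (fun w => ?_) (fun w => ?_)
    · rw [← h1 w, Equiv.Perm.mul_apply, hβ]
    · rw [← h1' w, Equiv.Perm.mul_apply, hβ']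
  · intro g hg
    obtain ⟨hgV, K, hK⟩ := mem_stabSet_iff.1 hg
    obtain ⟨N, hN⟩ := hgV.inv.exists_deep K
    refine mem_stabSet_iff.2 ⟨hgV.inv, N, fun β β' α α' hβ hβ' h h' => ?_⟩
    obtain ⟨α₁, h₁, hl⟩ := hN β hβ
    obtain ⟨α₁', h₁', hl'⟩ := hN β' hβ'
    rw [← h.unique h₁] at hl
    rw [← h'.unique h₁'] at hl'
    have i := h.inv
    have i' := h'.inv
    rw [inv_inv] at i i'
    exact (hK α α' β β' hl hl' i i').symm

lemma coneSwap_acts {r : Addr → Addr → Prop} (hr : IsTypeSystem r) {α β : Addr} (hp : Perp α β)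
    (h : r α β) {ξ : Addr} (hξ : max α.length β.length ≤ ξ.length) :
    ∃ η, actsOn (coneSwap α β) ξ η ∧ r ξ η := by
  rw [max_le_iff] at hξ
  by_cases h1 : Perp α ξ
  · by_cases h2 : Perp β ξ
    · exact ⟨ξ, coneSwap_other (Or.inr hp) h1.symm h2.symm, hr.1.refl ξ⟩
    · obtain ⟨γ, rfl⟩ := exists_append_of_not_perp hξ.2 h2
      exact ⟨α ++ γ, (coneSwap_right (Or.inr hp)).append γ, hr.append (hr.1.symm h) γ⟩
  · obtain ⟨γ, rfl⟩ := exists_append_of_not_perp hξ.1 h1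
    exact ⟨β ++ γ, (coneSwap_left (Or.inr hp)).append γ, hr.append h γ⟩

lemma coneSwap_mem_VSet {α β : Addr} (hp : Perp α β) : coneSwap α β ∈ VSet := by
  refine (isPrefixSubst_iff _).2 ⟨max α.length β.length, fun ξ hξ => ?_⟩
  obtain ⟨η, hη, -⟩ := coneSwap_acts isTypeSystem_true hp trivial hξ
  exact ⟨η, hη⟩

lemma coneSwap_mem_stabSet {r : Addr → Addr → Prop} (hr : IsTypeSystem r) {α β : Addr}
    (hp : Perp α β) (h : r α β) : coneSwap α β ∈ StabSet r := by
  refine mem_stabSet_iff.2 ⟨coneSwap_mem_VSet hp, max α.length β.length,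
    fun ξ ξ' η η' hξ hξ' h1 h1' => ?_⟩
  obtain ⟨ζ, hζ, hrζ⟩ := coneSwap_acts hr hp h hξ
  obtain ⟨ζ', hζ', hrζ'⟩ := coneSwap_acts hr hp h hξ'
  rw [← h1.unique hζ] at hrζ
  rw [← h1'.unique hζ'] at hrζ'
  exact ⟨fun e => hr.1.trans (hr.1.symm hrζ) (hr.1.trans e hrζ'),
    fun e => hr.1.trans hrζ (hr.1.trans e (hr.1.symm hrζ'))⟩

/-- If `α ∼ β ≁ γ` are pairwise incomparable, then swapping the cones of `α` and `γ` does not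
stabilize the type system, since it fixes the cone of `β`. -/
lemma stabSet_ne_VSet {r : Addr → Addr → Prop} (hr : IsTypeSystem r) {α β γ : Addr}
    (hαβ : Perp α β) (hαγ : Perp α γ) (hβγ : Perp β γ) (h : r α β) (hn : ¬ r α γ) :
    StabSet r ≠ VSet := by
  intro e
  have hm := coneSwap_mem_VSet hαγ
  rw [← e] at hm
  obtain ⟨-, N, hN⟩ := mem_stabSet_iff.1 hm
  apply hn
  refine hr.1.trans h (hr.1.symm (hr.of_append N fun δ hδ => ?_))
  refine (hN (α ++ δ) (β ++ δ) (γ ++ δ) (β ++ δ) ?_ ?_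
    ((coneSwap_left (Or.inr hαγ)).append δ)
    ((coneSwap_other (Or.inr hαγ) hαβ.symm hβγ).append δ)).1 (hr.append h δ)
  all_goals rw [List.length_append]; omega

/-- Simplicity applied to the relation of having all sufficiently deep descendants `R`-related. -/
lemma SimpleTS.dichotomy {r : Addr → Addr → Prop} (hr : SimpleTS r) (R : Addr → Addr → Prop)
    (hsymm : ∀ α β, R α β → R β α) (htrans : ∀ α β γ, R α β → R β γ → R α γ)
    (hR : ∀ α β, r α β → ∃ n : ℕ, ∀ γ : Addr, n ≤ γ.length → R (α ++ γ) (β ++ γ)) :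
    (∀ α β, (∃ n : ℕ, ∀ γ : Addr, n ≤ γ.length → R (α ++ γ) (β ++ γ)) ↔ r α β) ∨
      ∀ α β, ∃ n : ℕ, ∀ γ : Addr, n ≤ γ.length → R (α ++ γ) (β ++ γ) := by
  refine hr.2.2 _ ⟨⟨⟨?_, ?_, ?_⟩, ?_, ?_⟩, hR⟩
  · exact fun α => hR α α (hr.1.1.refl α)
  · rintro α β ⟨n, hn⟩
    exact ⟨n, fun γ hγ => hsymm _ _ (hn γ hγ)⟩
  · rintro α β γ ⟨n, hn⟩ ⟨m, hm⟩
    exact ⟨max n m, fun δ hδ => htrans _ _ _ (hn δ ((le_max_left _ _).trans hδ))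
      (hm δ ((le_max_right _ _).trans hδ))⟩
  · rintro α β ⟨n, hn⟩
    constructor
    · refine ⟨n, fun γ hγ => ?_⟩
      simpa using hn (false :: γ) (by rw [List.length_cons]; omega)
    · refine ⟨n, fun γ hγ => ?_⟩
      simpa using hn (true :: γ) (by rw [List.length_cons]; omega)
  · rintro α β ⟨n, hn⟩ ⟨m, hm⟩
    refine ⟨max n m + 1, fun γ hγ => ?_⟩
    cases γ with
    | nil => simp at hγ
    | cons c γ =>
      rw [List.length_cons] at hγ
      have hγ' : n ≤ γ.length ∧ m ≤ γ.length := by rw [← max_le_iff]; omega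
      cases c
      · simpa using hn γ hγ'.1
      · simpa using hm γ hγ'.2

/-- Collapsing a union `K` of types that is closed under descendants: either `K` is a single type,
or the collapse identifies everything at sufficient depth. -/
lemma SimpleTS.collapse {r : Addr → Addr → Prop} (hr : SimpleTS r) (K : Addr → Prop)
    (hK : ∀ α β, r α β → K α → K β) (hKa : ∀ α γ, K α → K (α ++ γ)) :
    (∀ α β, K α → K β → r α β) ∨ ∀ α β, ∃ n : ℕ, ∀ γ : Addr, n ≤ γ.length →
      r (α ++ γ) (β ++ γ) ∨ (K (α ++ γ) ∧ K (β ++ γ)) := by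
  refine (hr.dichotomy (fun α β => r α β ∨ (K α ∧ K β)) ?_ ?_ ?_).imp ?_ id
  · rintro α β (h | h)
    · exact Or.inl (hr.1.1.symm h)
    · exact Or.inr h.symm
  · rintro α β γ (h | h) (h' | h')
    · exact Or.inl (hr.1.1.trans h h')
    · exact Or.inr ⟨hK _ _ (hr.1.1.symm h) h'.1, h'.2⟩
    · exact Or.inr ⟨h.1, hK _ _ h' h.2⟩
    · exact Or.inr ⟨h.1, h'.2⟩
  · exact fun α β h => ⟨0, fun γ _ => Or.inl (hr.1.append h γ)⟩
  · exact fun h α β hα hβ => (h α β).1 ⟨0, fun γ _ => Or.inr ⟨hKa α γ hα, hKa β γ hβ⟩⟩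

/-- The type of `b` is absorbing: it is the type of both children, hence of all descendants. -/
def Absorbing (r : Addr → Addr → Prop) (b : Addr) : Prop :=
  r (b ++ [false]) b ∧ r (b ++ [true]) b

lemma Absorbing.append {r : Addr → Addr → Prop} (hr : IsTypeSystem r) {b : Addr}
    (hb : Absorbing r b) {α : Addr} (hα : r α b) (γ : Addr) : r (α ++ γ) b := by
  induction γ generalizing α with
  | nil => simpa using hα
  | cons c γ ih =>
    have h1 : r (α ++ [c]) b := by
      refine hr.1.trans (hr.append hα [c]) ?_
      cases c
      · exact hb.1
      · exact hb.2
    simpa using ih h1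

/-- Collapsing the set of all types that occur at descendants of `α`. -/
lemma SimpleTS.reach {r : Addr → Addr → Prop} (hr : SimpleTS r) (α : Addr) :
    Absorbing r α ∨ ∀ ξ ζ : Addr, ∃ n : ℕ, ∀ γ : Addr, n ≤ γ.length →
      r (ξ ++ γ) (ζ ++ γ) ∨
        ((∃ δ, r (α ++ δ) (ξ ++ γ)) ∧ ∃ δ, r (α ++ δ) (ζ ++ γ)) := by
  refine (hr.collapse (fun β => ∃ δ, r (α ++ δ) β) ?_ ?_).imp ?_ id
  · rintro β γ h ⟨δ, hδ⟩
    exact ⟨δ, hr.1.1.trans hδ h⟩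
  · rintro β γ ⟨δ, hδ⟩
    exact ⟨δ ++ γ, by simpa using hr.1.append hδ γ⟩
  · intro h
    have h0 : ∃ δ, r (α ++ δ) α := ⟨[], by simpa using hr.1.1.refl α⟩
    exact ⟨h _ _ ⟨[false], hr.1.1.refl _⟩ h0, h _ _ ⟨[true], hr.1.1.refl _⟩ h0⟩

/-! ### Type systems in which every deep type recurs with room to spare -/

/-- Every deep type occurs, at arbitrary depth, away from any few given deep addresses. -/
def HasRoom (r : Addr → Addr → Prop) : Prop :=
  ∃ N : ℕ, ∀ (K : ℕ) (ν : Addr) (L : List Addr), N ≤ ν.length → L.length < 8 →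
    (∀ α ∈ L, N ≤ α.length) → ∃ γ : Addr, K ≤ γ.length ∧ r γ ν ∧ ∀ α ∈ L, Perp γ α

lemma hasRoom_of_recurrent {r : Addr → Addr → Prop} (N : ℕ)
    (h : ∀ ν : Addr, N ≤ ν.length → ∃ β : Addr, β.length + 3 ≤ N ∧
      ∀ μ, ∃ γ, r (β ++ μ ++ γ) ν) : HasRoom r := by
  refine ⟨N, fun K ν L hν hL hlen => ?_⟩
  obtain ⟨β, hβ, hrec⟩ := h ν hν
  obtain ⟨μ, hμ⟩ := exists_room β L hL fun α hα => hβ.trans (hlen α hα)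
  obtain ⟨γ, hγ⟩ := hrec (μ ++ List.replicate K false)
  refine ⟨_, ?_, hγ, fun α hα => ?_⟩
  · simp only [List.length_append, List.length_replicate]; omega
  · have := (hμ α hα).append_left (List.replicate K false ++ γ)
    simpa using this

/-- Without absorbing types, every deep type occurs below every address; the required depth is
uniform because there are finitely many types. -/
lemma hasRoom_of_no_absorbing {r : Addr → Addr → Prop} (hr : SimpleTS r)
    (hfin : (Set.range (typeOf r)).Finite) (hno : ∀ b, ¬ Absorbing r b) : HasRoom r := by
  have h1 : ∀ α : Addr, ∃ n : ℕ, ∀ ν : Addr, n ≤ ν.length → ∃ δ, r (α ++ δ) ν := by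
    intro α
    obtain ⟨n, hn⟩ := (hr.reach α).resolve_left (hno α) [] α
    refine ⟨n, fun ν hν => ?_⟩
    rcases hn ν hν with h | h
    · exact ⟨ν, hr.1.1.symm (by simpa using h)⟩
    · simpa using h.1
  choose n hn using h1
  obtain ⟨N, hN⟩ : ∃ N : ℕ, ∀ α : Addr, ∃ α', r α' α ∧ n α' ≤ N := by
    have hc : ∀ t : Set Addr, ∃ m : ℕ, ∀ α, typeOf r α = t → ∃ α', r α' α ∧ n α' ≤ m := by
      intro t
      by_cases ht : ∃ α, typeOf r α = t
      · obtain ⟨α₀, h0⟩ := ht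
        refine ⟨n α₀, fun α hα => ⟨α₀, ?_, le_rfl⟩⟩
        have : α ∈ typeOf r α := hr.1.1.refl α
        rwa [hα, ← h0] at this
      · exact ⟨0, fun α hα => absurd ⟨α, hα⟩ ht⟩
    choose m hm using hc
    obtain ⟨N, hN⟩ := (hfin.image m).bddAbove
    refine ⟨N, fun α => ?_⟩
    obtain ⟨α', h, hl⟩ := hm _ α rfl
    exact ⟨α', h, hl.trans (hN ⟨_, ⟨α, rfl⟩, rfl⟩)⟩
  refine hasRoom_of_recurrent (N + 3) fun ν hν => ⟨[], by simp, fun μ => ?_⟩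
  obtain ⟨μ', hμ', hl⟩ := hN μ
  obtain ⟨δ, hδ⟩ := hn μ' ν (by omega)
  exact ⟨δ, hr.1.1.trans (hr.1.1.symm (by simpa using hr.1.append hμ' δ)) hδ⟩

/-- If there are two absorbing types, then they are the only types at sufficient depth. -/
lemma hasRoom_of_two_absorbing {r : Addr → Addr → Prop} (hr : SimpleTS r) {b c : Addr}
    (hb : Absorbing r b) (hc : Absorbing r c) (hbc : ¬ r b c) : HasRoom r := by
  have h := hr.collapse (fun α => r α b ∨ r α c) ?_ ?_
  · have h := h.resolve_left fun h => hbc (h b c (Or.inl (hr.1.1.refl b)) (Or.inr (hr.1.1.refl c)))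
    obtain ⟨n, hn⟩ := h [] b
    refine hasRoom_of_recurrent (n + b.length + c.length + 3) fun ν hν => ?_
    have hν' : r ν b ∨ r ν c := by
      rcases hn ν (by omega) with h | h
      · exact Or.inl (hr.1.1.trans (by simpa using h) (hb.append hr.1 (hr.1.1.refl b) ν))
      · simpa using h.1
    rcases hν' with h | h
    · exact ⟨b, by omega, fun μ => ⟨[], hr.1.1.trans
        (hb.append hr.1 (hb.append hr.1 (hr.1.1.refl b) μ) []) (hr.1.1.symm h)⟩⟩
    · exact ⟨c, by omega, fun μ => ⟨[], hr.1.1.trans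
        (hc.append hr.1 (hc.append hr.1 (hr.1.1.refl c) μ) []) (hr.1.1.symm h)⟩⟩
  · rintro α β h (h' | h')
    · exact Or.inl (hr.1.1.trans (hr.1.1.symm h) h')
    · exact Or.inr (hr.1.1.trans (hr.1.1.symm h) h')
  · rintro α γ (h | h)
    · exact Or.inl (hb.append hr.1 h γ)
    · exact Or.inr (hc.append hr.1 h γ)

lemma HasRoom.stabSet_ne_VSet {r : Addr → Addr → Prop} (hr : SimpleTS r) (hroom : HasRoom r) :
    StabSet r ≠ VSet := by
  obtain ⟨N, hN⟩ := hroom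
  obtain ⟨α, β, hαβ⟩ := hr.2.1
  obtain ⟨δ, hδ, hn⟩ : ∃ δ : Addr, δ.length = N ∧ ¬ r (α ++ δ) (β ++ δ) := by
    by_contra! h
    exact hαβ (hr.1.of_append N h)
  have hα : N ≤ (α ++ δ).length := by rw [List.length_append]; omega
  have hβ : N ≤ (β ++ δ).length := by rw [List.length_append]; omega
  obtain ⟨γ₁, hl₁, h₁, -⟩ := hN N (α ++ δ) [] hα (by simp) (by simp)
  obtain ⟨γ₂, hl₂, h₂, hp₂⟩ := hN N (α ++ δ) [γ₁] hα (by simp) (by simpa using hl₁)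
  obtain ⟨γ₃, hl₃, h₃, hp₃⟩ := hN N (β ++ δ) [γ₁, γ₂] hβ (by simp) (by simp [hl₁, hl₂])
  simp only [List.mem_cons, List.not_mem_nil, or_false, forall_eq_or_imp, forall_eq] at hp₂ hp₃
  refine _root_.stabSet_ne_VSet hr.1 hp₂.symm hp₃.1.symm hp₃.2.symm
    (hr.1.1.trans h₁ (hr.1.1.symm h₂)) fun h => hn ?_
  exact hr.1.1.trans (hr.1.1.symm h₁) (hr.1.1.trans h h₃)

/-- Two deep addresses are `H`-linked if some incomparable deep representatives of their types have
their cone swap in `H`. -/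
def Linked (r : Addr → Addr → Prop) (H : Set (Equiv.Perm Cantor)) (N : ℕ) (α β : Addr) : Prop :=
  N ≤ α.length ∧ N ≤ β.length ∧ ∃ α₁ β₁ : Addr, N ≤ α₁.length ∧ N ≤ β₁.length ∧ r α₁ α ∧ r β₁ β ∧
    Perp α₁ β₁ ∧ coneSwap α₁ β₁ ∈ H

/-- For type systems with room, being linked is a coherent equivalence relation on deep addresses
containing `∼`; by simplicity it is either `∼` itself, and then `H` preserves `∼`, or it eventually
identifies everything, and then `H` contains all small cone swaps. -/
lemma HasRoom.maximal {r : Addr → Addr → Prop} (hr : SimpleTS r) (hroom : HasRoom r)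
    {H : Set (Equiv.Perm Cantor)} (hH : IsSubgroupSet H) (hM : StabSet r ⊆ H) (hV : H ⊆ VSet) :
    H = StabSet r ∨ H = VSet := by
  obtain ⟨N, hN⟩ := hroom
  have rsymm : ∀ {α β}, r α β → r β α := hr.1.1.symm
  have rtrans : ∀ {α β γ}, r α β → r β γ → r α γ := hr.1.1.trans
  have hsw : ∀ {α β}, Perp α β → r α β → coneSwap α β ∈ H := fun hp h =>
    hM (coneSwap_mem_stabSet hr.1 hp h)
  -- the choice of representatives is immaterial
  have uniform : ∀ α β, Linked r H N α β → ∀ α' β' : Addr, N ≤ α'.length → N ≤ β'.length →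
      r α' α → r β' β → Perp α' β' → coneSwap α' β' ∈ H := by
    rintro α β ⟨hα, hβ, α₁, β₁, hα₁, hβ₁, hr1, hr1', hp1, hs⟩ α' β' hα' hβ' hr' hr'' hp'
    obtain ⟨α₂, hl₂, h₂, hp₂⟩ := hN N α [α₁, β₁, α', β'] hα (by simp) (by simp [*])
    obtain ⟨β₂, hl₃, h₃, hp₃⟩ := hN N β [α₁, β₁, α', β', α₂] hβ (by simp) (by simp [*])
    simp only [List.mem_cons, List.not_mem_nil, or_false, forall_eq_or_imp, forall_eq]
      at hp₂ hp₃
    obtain ⟨p1, p2, p3, p4⟩ := hp₂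
    obtain ⟨q1, q2, q3, q4, q5⟩ := hp₃
    have s1 : coneSwap α₂ β₁ ∈ H :=
      hH.swap_trans p1 hp1 p2 (hsw p1 (rtrans h₂ (rsymm hr1))) hs
    have s2 : coneSwap α₂ β₂ ∈ H :=
      hH.swap_trans p2 q2.symm q5.symm s1 (hsw q2.symm (rtrans hr1' (rsymm h₃)))
    have s3 : coneSwap α' β₂ ∈ H :=
      hH.swap_trans p3.symm q5.symm q3.symm (hsw p3.symm (rtrans hr' (rsymm h₂))) s2
    exact hH.swap_trans q3.symm q4 hp' s3 (hsw q4 (rtrans h₃ (rsymm hr'')))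
  have hdich := hr.dichotomy (Linked r H N) ?_ ?_ ?_
  · rcases hdich with heq | huniv
    · left
      -- the swap of `α'` and `β'` carries a swap `(α'δ γ)` in the stabilizer to `(β'δ γ)`
      have hlink : ∀ α β, Linked r H N α β → r α β := by
        rintro α β ⟨hα, hβ, α', β', hα', hβ', h1, h2, hp, hs⟩
        refine (heq α β).1 ⟨0, fun δ _ => ?_⟩
        have hαδ : N ≤ (α ++ δ).length := by rw [List.length_append]; omega
        have hβδ : N ≤ (β ++ δ).length := by rw [List.length_append]; omega
        obtain ⟨γ, hl, hγ, hpγ⟩ := hN N (α ++ δ) [α', β'] hαδ (by simp) (by simp [*])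
        simp only [List.mem_cons, List.not_mem_nil, or_false, forall_eq_or_imp, forall_eq] at hpγ
        refine ⟨hαδ, hβδ, γ, β' ++ δ, hl, by rw [List.length_append]; omega, hγ,
          hr.1.append h2 δ, hpγ.2.append_right δ, ?_⟩
        exact hH.swap_conj hs (hpγ.1.append_right δ)
          (hsw (hpγ.1.append_right δ) (rtrans hγ (rsymm (hr.1.append h1 δ))))
          (coneSwap_other (Or.inr hp) hpγ.1 hpγ.2)
          ((coneSwap_left (Or.inr hp)).append δ)
      have hpres : ∀ h ∈ H, ∃ K : ℕ, ∀ α α' β β' : Addr, K ≤ α.length → K ≤ α'.length →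
          actsOn h α β → actsOn h α' β' → r α α' → r β β' := by
        intro h hh
        obtain ⟨K, hK⟩ := (hV hh : IsPrefixSubst h).exists_deep N
        have hperp : ∀ α α' β β' : Addr, K ≤ α.length → K ≤ α'.length →
            actsOn h α β → actsOn h α' β' → r α α' → Perp α α' → r β β' := by
          intro α α' β β' hα hα' hβ hβ' hαα' hp
          obtain ⟨β₁, hβ₁, hl⟩ := hK α hα
          obtain ⟨β₁', hβ₁', hl'⟩ := hK α' hα'
          rw [hβ₁.unique hβ] at hl
          rw [hβ₁'.unique hβ'] at hl'
          exact hlink β β' ⟨hl, hl', β, β', hl, hl', hr.1.1.refl _, hr.1.1.refl _,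
            hβ.perp hβ' hp, hH.swap_conj hh hp (hsw hp hαα') hβ hβ'⟩
        refine ⟨max K N, fun α α' β β' hα hα' hβ hβ' hαα' => ?_⟩
        rw [max_le_iff] at hα hα'
        obtain ⟨γ, hl, hγ, hpγ⟩ := hN K α [α, α'] hα.2 (by simp) (by simp [*])
        simp only [List.mem_cons, List.not_mem_nil, or_false, forall_eq_or_imp, forall_eq] at hpγ
        obtain ⟨η, hη, -⟩ := hK γ hl
        exact rtrans (rsymm (hperp γ α η β hl hα.1 hη hβ hγ hpγ.1))
          (hperp γ α' η β' hl hα'.1 hη hβ' (rtrans hγ hαα') hpγ.2)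
      refine Set.Subset.antisymm (fun h hh => ?_) hM
      have hhV : IsPrefixSubst h := hV hh
      obtain ⟨K, hK⟩ := hpres h hh
      obtain ⟨K', hK'⟩ := hpres h⁻¹ (hH.2.2 h hh)
      obtain ⟨K'', hK''⟩ := hhV.exists_deep K'
      refine mem_stabSet_iff.2 ⟨hhV, max K K'', fun α α' β β' hα hα' hβ hβ' => ?_⟩
      rw [max_le_iff] at hα hα'
      refine ⟨hK α α' β β' hα.1 hα'.1 hβ hβ', fun hββ' => ?_⟩
      obtain ⟨β₁, hβ₁, hl⟩ := hK'' α hα.2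
      obtain ⟨β₁', hβ₁', hl'⟩ := hK'' α' hα'.2
      rw [hβ₁.unique hβ] at hl
      rw [hβ₁'.unique hβ'] at hl'
      exact hK' β β' α α' hl hl' hβ.inv hβ'.inv hββ'
    · right
      refine eq_VSet_of_deep_swaps hH hV fun α β hp => ?_
      obtain ⟨n, hn⟩ := huniv α β
      refine ⟨n, fun γ hγ => ?_⟩
      have hl := hn γ hγ.ge
      exact uniform _ _ hl _ _ hl.1 hl.2.1 (hr.1.1.refl _) (hr.1.1.refl _) (hp.append γ γ)
  · rintro α β ⟨hα, hβ, α', β', hα', hβ', h1, h2, hp, hs⟩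
    exact ⟨hβ, hα, β', α', hβ', hα', h2, h1, hp.symm, by rwa [coneSwap_comm hp.symm]⟩
  · intro α β γ h h'
    obtain ⟨α₁, hl₁, h₁, -⟩ := hN N α [] h.1 (by simp) (by simp)
    obtain ⟨β₁, hl₂, h₂, hp₂⟩ := hN N β [α₁] h.2.1 (by simp) (by simp [*])
    obtain ⟨γ₁, hl₃, h₃, hp₃⟩ := hN N γ [α₁, β₁] h'.2.1 (by simp) (by simp [*])
    simp only [List.mem_cons, List.not_mem_nil, or_false, forall_eq_or_imp, forall_eq] at hp₂ hp₃
    exact ⟨h.1, h'.2.1, α₁, γ₁, hl₁, hl₃, h₁, h₃, hp₃.1.symm,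
      hH.swap_trans hp₂.symm hp₃.2.symm hp₃.1.symm
        (uniform _ _ h _ _ hl₁ hl₂ h₁ h₂ hp₂.symm) (uniform _ _ h' _ _ hl₂ hl₃ h₂ h₃ hp₃.2.symm)⟩
  · intro α β h
    refine ⟨N, fun γ hγ => ?_⟩
    have hα : N ≤ (α ++ γ).length := by rw [List.length_append]; omega
    have hβ : N ≤ (β ++ γ).length := by rw [List.length_append]; omega
    obtain ⟨α₁, hl₁, h₁, -⟩ := hN N (α ++ γ) [] hα (by simp) (by simp)
    obtain ⟨β₁, hl₂, h₂, hp₂⟩ := hN N (β ++ γ) [α₁] hβ (by simp) (by simp [*])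
    simp only [List.mem_cons, List.not_mem_nil, or_false, forall_eq] at hp₂
    exact ⟨hα, hβ, α₁, β₁, hl₁, hl₂, h₁, h₂, hp₂.symm,
      hsw hp₂.symm (rtrans h₁ (rtrans (hr.1.append h γ) (rsymm h₂)))⟩

/-! ### Type systems with exactly one absorbing type -/

section UniqueAbsorbing

variable {r : Addr → Addr → Prop} {b : Addr}

lemma exists_append_absorbing (hr : SimpleTS r) (hb : Absorbing r b)
    (hu : ∀ c, Absorbing r c → r c b) (α : Addr) : ∃ γ, r (α ++ γ) b := by
  rcases hr.reach α with h | h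
  · exact ⟨[], by simpa using hu α h⟩
  · obtain ⟨n, hn⟩ := h α b
    have hbn := hb.append hr.1 (hr.1.1.refl b) (List.replicate n false)
    rcases hn (List.replicate n false) (by simp) with h | ⟨-, δ, hδ⟩
    · exact ⟨_, hr.1.1.trans h hbn⟩
    · exact ⟨δ, hr.1.1.trans hδ hbn⟩

/-- All deep non-absorbing types occur below any given address of non-absorbing type. -/
lemma exists_depth_reach (hr : SimpleTS r) (hb : Absorbing r b) {α : Addr} (hα : ¬ r α b) :
    ∃ n : ℕ, ∀ ξ : Addr, n ≤ ξ.length → ¬ r ξ b → ∃ δ, r (α ++ δ) ξ := by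
  have h := hr.collapse (fun β => r β b ∨ ∃ δ, r (α ++ δ) β) ?_ ?_
  · have h := h.resolve_left fun h => hα
      (h α b (Or.inr ⟨[], by simpa using hr.1.1.refl α⟩) (Or.inl (hr.1.1.refl b)))
    obtain ⟨n, hn⟩ := h [] b
    refine ⟨n, fun ξ hξ hξb => ?_⟩
    rcases hn ξ hξ with h | ⟨h, -⟩
    · exact absurd (hr.1.1.trans (by simpa using h) (hb.append hr.1 (hr.1.1.refl b) ξ)) hξb
    · exact (h.resolve_left (by simpa using hξb))
  · rintro β γ h (h' | ⟨δ, hδ⟩)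
    · exact Or.inl (hr.1.1.trans (hr.1.1.symm h) h')
    · exact Or.inr ⟨δ, hr.1.1.trans hδ h⟩
  · rintro β γ (h | ⟨δ, hδ⟩)
    · exact Or.inl (hb.append hr.1 h γ)
    · exact Or.inr ⟨δ ++ γ, by simpa using hr.1.append hδ γ⟩

lemma exists_not_absorbing (hr : SimpleTS r) (b : Addr) : ∃ α, ¬ r α b := by
  by_contra! h
  obtain ⟨α, β, hαβ⟩ := hr.2.1
  exact hαβ (hr.1.1.trans (h α) (hr.1.1.symm (h β)))

/-- By simplicity, a type is determined by which deep descendants have absorbing type. -/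
lemma rel_iff_absorbing (hr : SimpleTS r) (hb : Absorbing r b) (α β : Addr) :
    r α β ↔ ∃ n : ℕ, ∀ γ : Addr, n ≤ γ.length → (r (α ++ γ) b ↔ r (β ++ γ) b) := by
  rcases hr.dichotomy (fun α β => r α b ↔ r β b) (fun _ _ h => h.symm)
    (fun _ _ _ h h' => h.trans h') (fun α β h => ⟨0, fun γ _ =>
      ⟨fun e => hr.1.1.trans (hr.1.1.symm (hr.1.append h γ)) e,
        fun e => hr.1.1.trans (hr.1.append h γ) e⟩⟩) with h | h
  · exact (h α β).symm
  · exfalso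
    obtain ⟨ξ, hξ⟩ := exists_not_absorbing hr b
    obtain ⟨n, hn⟩ := h ξ b
    refine hξ (hr.1.of_append n fun γ hγ => ?_)
    have hbγ := hb.append hr.1 (hr.1.1.refl b) γ
    exact hr.1.1.trans ((hn γ hγ.ge).2 hbγ) (hr.1.1.symm hbγ)

lemma exists_absorbing_perp (hr : SimpleTS r) (hb : Absorbing r b)
    (hu : ∀ c, Absorbing r c → r c b) (K : ℕ) (L : List Addr) (hL : L.length < 8)
    (hlen : ∀ α ∈ L, 3 ≤ α.length) :
    ∃ δ : Addr, K ≤ δ.length ∧ r δ b ∧ ∀ α ∈ L, Perp δ α := by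
  obtain ⟨μ, hμ⟩ := exists_room [] L hL (by simpa using hlen)
  obtain ⟨γ, hγ⟩ := exists_append_absorbing hr hb hu (μ ++ List.replicate K false)
  refine ⟨_, ?_, hγ, fun α hα => ?_⟩
  · simp only [List.length_append, List.length_replicate]; omega
  · have := (hμ α hα).append_left (List.replicate K false ++ γ)
    simpa using this

lemma exists_deep_not_absorbing (hr : SimpleTS r) (hb : Absorbing r b) {α : Addr}
    (hα : ¬ r α b) (n : ℕ) : ∃ γ : Addr, γ.length = n ∧ ¬ r (α ++ γ) b := by
  by_contra! h
  refine hα (hr.1.of_append n fun γ hγ => ?_)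
  exact hr.1.1.trans (h γ hγ) (hr.1.1.symm (hb.append hr.1 (hr.1.1.refl b) γ))

lemma stabSet_ne_VSet_of_unique_absorbing (hr : SimpleTS r) (hb : Absorbing r b)
    (hu : ∀ c, Absorbing r c → r c b) : StabSet r ≠ VSet := by
  obtain ⟨ξ, hξ⟩ := exists_not_absorbing hr b
  obtain ⟨γ, hγ, hn⟩ := exists_deep_not_absorbing hr hb hξ 3
  have hl : 3 ≤ (ξ ++ γ).length := by rw [List.length_append]; omega
  obtain ⟨δ, hδl, hδ, hp⟩ := exists_absorbing_perp hr hb hu 3 [ξ ++ γ] (by simp)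
    (by simpa using hl)
  obtain ⟨δ', -, hδ', hp'⟩ := exists_absorbing_perp hr hb hu 3 [ξ ++ γ, δ] (by simp)
    (by simpa using ⟨by simpa using hl, hδl⟩)
  simp only [List.mem_cons, List.not_mem_nil, or_false, forall_eq_or_imp, forall_eq] at hp hp'
  exact stabSet_ne_VSet hr.1 hp'.2 hp'.1 hp (hr.1.1.trans hδ' (hr.1.1.symm hδ))
    fun h => hn (hr.1.1.trans (hr.1.1.symm h) hδ')

/-- An element of `V` that preserves the absorbing type wherever it acts stabilizes the whole type
system. -/
lemma mem_stabSet_of_preserves (hr : SimpleTS r) (hb : Absorbing r b) {h : Equiv.Perm Cantor}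
    (hh : IsPrefixSubst h) (hpres : ∀ α β, actsOn h α β → (r α b ↔ r β b)) :
    h ∈ StabSet r := by
  refine mem_stabSet_iff.2 ⟨hh, 0, fun α α' β β' _ _ hβ hβ' => ?_⟩
  rw [rel_iff_absorbing hr hb, rel_iff_absorbing hr hb]
  refine exists_congr fun n => forall_congr' fun γ => imp_congr_right fun _ => ?_
  rw [hpres _ _ (hβ.append γ), hpres _ _ (hβ'.append γ)]

/-- If `H` properly contains the stabilizer, some `h ∈ H` carries a non-absorbing address `α` to an
absorbing one. Conjugating swaps of absorbing cones by `h` puts the swaps of descendants of `α` with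
absorbing cones into `H`; as all deep non-absorbing types occur below `α`, all small cone swaps
follow. -/
lemma maximal_of_unique_absorbing (hr : SimpleTS r) (hb : Absorbing r b)
    (hu : ∀ c, Absorbing r c → r c b) {H : Set (Equiv.Perm Cantor)} (hH : IsSubgroupSet H)
    (hM : StabSet r ⊆ H) (hV : H ⊆ VSet) : H = StabSet r ∨ H = VSet := by
  by_cases hex : ∃ h ∈ H, ∃ α β, actsOn h α β ∧ ¬ r α b ∧ r β b
  swap
  · left
    push Not at hex
    refine Set.Subset.antisymm (fun h hh => ?_) hM
    refine mem_stabSet_of_preserves hr hb (hV hh) fun α β hαβ => ?_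
    constructor
    · intro hα
      by_contra hβ
      exact hex h⁻¹ (hH.2.2 h hh) β α hαβ.inv hβ hα
    · intro hβ
      by_contra hα
      exact hex h hh α β hαβ hα hβ
  right
  have rsymm : ∀ {α β}, r α β → r β α := hr.1.1.symm
  have rtrans : ∀ {α β γ}, r α β → r β γ → r α γ := hr.1.1.trans
  have hsw : ∀ {α β}, Perp α β → r α β → coneSwap α β ∈ H := fun hp h =>
    hM (coneSwap_mem_stabSet hr.1 hp h)
  obtain ⟨h, hh, α, β, hαβ, hα, hβ⟩ : ∃ h ∈ H, ∃ α β, actsOn h α β ∧ (3 ≤ α.length ∧ ¬ r α b) ∧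
      r β b := by
    obtain ⟨h, hh, α, β, hαβ, hα, hβ⟩ := hex
    obtain ⟨γ, hγ, hn⟩ := exists_deep_not_absorbing hr hb hα 3
    exact ⟨h, hh, α ++ γ, β ++ γ, hαβ.append γ, ⟨by rw [List.length_append]; omega, hn⟩,
      hb.append hr.1 hβ γ⟩
  obtain ⟨hα3, hα⟩ := hα
  obtain ⟨n, hn⟩ := exists_depth_reach hr hb hα
  obtain ⟨K, hK⟩ := (isPrefixSubst_iff h).1 (hV hh)
  have step1 : ∀ γ δ : Addr, 3 ≤ δ.length → r δ b → Perp (α ++ γ) δ →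
      coneSwap (α ++ γ) δ ∈ H := by
    intro γ δ hδl hδ hp
    -- an absorbing address `μ ++ ζ` away from `α` and `δ` with absorbing image under `h`
    obtain ⟨μ, hμl, hμ, hpμ⟩ := exists_absorbing_perp hr hb hu K [α, δ] (by simp) (by simp [*])
    simp only [List.mem_cons, List.not_mem_nil, or_false, forall_eq_or_imp, forall_eq] at hpμ
    obtain ⟨ν, hν⟩ := hK μ hμl
    obtain ⟨ζ, hζ⟩ := exists_append_absorbing hr hb hu ν
    have hμζ : r (μ ++ ζ) b := hb.append hr.1 hμ ζ
    have hpα : Perp (α ++ γ) (μ ++ ζ) := hpμ.1.symm.append γ ζ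
    have a1 := hαβ.append γ
    have a2 := hν.append ζ
    have hp' := a1.perp a2 hpα
    have s1 : coneSwap (α ++ γ) (μ ++ ζ) ∈ H :=
      hH.swap_conj (hH.2.2 h hh) hp' (hsw hp' (rtrans (hb.append hr.1 hβ γ) (rsymm hζ)))
        a1.inv a2.inv
    have hpδ : Perp (μ ++ ζ) δ := hpμ.2.append_left ζ
    exact hH.swap_trans hpα hpδ hp s1 (hsw hpδ (rtrans hμζ (rsymm hδ)))
  have step2 : ∀ ξ δ : Addr, max n α.length ≤ ξ.length → 3 ≤ δ.length → ¬ r ξ b → r δ b →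
      Perp ξ δ → coneSwap ξ δ ∈ H := by
    intro ξ δ hξl hδl hξ hδ hp
    rw [max_le_iff] at hξl
    by_cases hαξ : Perp α ξ
    · obtain ⟨γ, hγ⟩ := hn ξ hξl.1 hξ
      have hξ3 : 3 ≤ ξ.length := hα3.trans hξl.2
      obtain ⟨δ', hδ'l, hδ', hp'⟩ := exists_absorbing_perp hr hb hu 3 [α, ξ, δ] (by simp)
        (by simp [*])
      simp only [List.mem_cons, List.not_mem_nil, or_false, forall_eq_or_imp, forall_eq] at hp'
      obtain ⟨p1, p2, p3⟩ := hp'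
      have pξ : Perp ξ (α ++ γ) := hαξ.symm.append_right γ
      have pδ : Perp (α ++ γ) δ' := p1.symm.append_left γ
      have s1 : coneSwap ξ δ' ∈ H :=
        hH.swap_trans pξ pδ p2.symm (hsw pξ (rsymm hγ)) (step1 γ δ' hδ'l hδ' pδ)
      exact hH.swap_trans p2.symm p3 hp s1 (hsw p3 (rtrans hδ' (rsymm hδ)))
    · obtain ⟨γ, rfl⟩ := exists_append_of_not_perp hξl.2 hαξ
      exact step1 γ δ hδl hδ hp
  have step3 : ∀ ξ η : Addr, max n α.length ≤ ξ.length → max n α.length ≤ η.length →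
      Perp ξ η → coneSwap ξ η ∈ H := by
    intro ξ η hξl hηl hp
    have hξ3 : 3 ≤ ξ.length := hα3.trans ((le_max_right _ _).trans hξl)
    have hη3 : 3 ≤ η.length := hα3.trans ((le_max_right _ _).trans hηl)
    by_cases hξ : r ξ b <;> by_cases hη : r η b
    · exact hsw hp (rtrans hξ (rsymm hη))
    · rw [coneSwap_comm hp]
      exact step2 η ξ hηl hξ3 hη hξ hp.symm
    · exact step2 ξ η hξl hη3 hξ hη hp
    · obtain ⟨δ, hδl, hδ, hp'⟩ := exists_absorbing_perp hr hb hu 3 [ξ, η] (by simp) (by simp [*])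
      simp only [List.mem_cons, List.not_mem_nil, or_false, forall_eq_or_imp, forall_eq] at hp'
      refine hH.swap_trans hp'.1.symm hp'.2 hp (step2 ξ δ hξl hδl hξ hδ hp'.1.symm) ?_
      rw [coneSwap_comm hp'.2]
      exact step2 η δ hηl hδl hη hδ hp'.2.symm
  refine eq_VSet_of_deep_swaps hH hV fun ξ η hp => ⟨max n α.length, fun γ hγ => ?_⟩
  refine step3 _ _ ?_ ?_ (hp.append γ γ) <;> rw [List.length_append] <;> omega

end UniqueAbsorbing

/-- The stabilizer of a finite simple type system is a maximal
subgroup of Thompson's group `V`. -/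
theorem stabSet_isMaximal_of_finite_simple
    (r : Addr → Addr → Prop) (hr : SimpleTS r)
    (hfin : (Set.range (typeOf r)).Finite) :
    IsMaximalSubgroupOfV (StabSet r) := by
  refine ⟨isSubgroupSet_stabSet r, fun g hg => hg.1, ?_⟩
  by_cases hroom : HasRoom r
  · exact ⟨hroom.stabSet_ne_VSet hr, fun H hH hM hV => hroom.maximal hr hH hM hV⟩
  · obtain ⟨b, hb⟩ : ∃ b, Absorbing r b := by
      by_contra! h
      exact hroom (hasRoom_of_no_absorbing hr hfin h)
    have hu : ∀ c, Absorbing r c → r c b := by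
      intro c hc
      by_contra h
      exact hroom (hasRoom_of_two_absorbing hr hc hb h)
    exact ⟨stabSet_ne_VSet_of_unique_absorbing hr hb hu,
      fun H hH hM hV => maximal_of_unique_absorbing hr hb hu hH hM hV⟩
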